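/- Let G1 and G2 be graphs on N vertices with real symmetric adjacency matrices A1 and A2, and suppose A1 = P A2 Pᵀ for some N×N permutation matrix P (i.e., G1 and G2 are isomorphic). For a real symmetric N×N matrix A, let 𝒱(A) denote the set of real orthogonal N×N matrices V such that A = V Λ Vᵀ for some diagonal matrix Λ. Then for any real symmetric N×N matrix B, the infimum over V1 ∈ 𝒱(A1) and W ∈ 𝒱(B) of the Frobenius norm ‖V1·W − I‖_F equals the infimum over V2 ∈ 𝒱(A2) and W ∈ 𝒱(B) of ‖V2·W − I‖_F. -/

import Mathlib

open Matrix

/-- Frobenius norm of a real square matrix. -/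
noncomputable def frobNorm {N : ℕ} (M : Matrix (Fin N) (Fin N) ℝ) : ℝ :=
  Real.sqrt (∑ i, ∑ j, (M i j) ^ 2)

/-- The set of real orthogonal eigenvector matrices of a real symmetric matrix `A`:
orthogonal `V` such that `A = V Λ Vᵀ` for some diagonal `Λ`. -/
def eigSet {N : ℕ} (A : Matrix (Fin N) (Fin N) ℝ) : Set (Matrix (Fin N) (Fin N) ℝ) :=
  {V | Vᵀ * V = 1 ∧ ∃ Λ : Matrix (Fin N) (Fin N) ℝ, Λ.IsDiag ∧ A = V * Λ * Vᵀ}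

/-- The values `‖V * W - 1‖_F` for `V ∈ 𝒱(A)` and `W ∈ 𝒱(B)`; the dualness of `A` and `B` is the
infimum of this set. -/
def dualnessValues {N : ℕ} (A B : Matrix (Fin N) (Fin N) ℝ) : Set ℝ :=
  {x | ∃ V ∈ eigSet A, ∃ W ∈ eigSet B, x = frobNorm (V * W - 1)}

section PermMatrix

variable {n R : Type*} [Fintype n] [DecidableEq n] [NonAssocSemiring R] (σ : Equiv.Perm n)

theorem permMatrix_transpose_mul_self : (σ.permMatrix R)ᵀ * σ.permMatrix R = 1 := by
  rw [transpose_permMatrix, ← permMatrix_mul, mul_inv_cancel, permMatrix_one]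

theorem permMatrix_mul_transpose_self : σ.permMatrix R * (σ.permMatrix R)ᵀ = 1 := by
  rw [transpose_permMatrix, ← permMatrix_mul, inv_mul_cancel, permMatrix_one]

theorem permMatrix_mul_mul_transpose (M : Matrix n n R) :
    σ.permMatrix R * M * (σ.permMatrix R)ᵀ = M.submatrix σ σ := by
  rw [transpose_permMatrix, PEquiv.toMatrix_toPEquiv_mul, PEquiv.mul_toMatrix_toPEquiv,
    submatrix_submatrix]
  rfl

end PermMatrix

section Orthogonal

variable {N : ℕ} {U A V : Matrix (Fin N) (Fin N) ℝ}

theorem frobNorm_eq_sqrt_trace_mul_transpose (M : Matrix (Fin N) (Fin N) ℝ) :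
    frobNorm M = √(M * Mᵀ).trace := by
  simp only [frobNorm, trace, diag_apply, mul_apply, transpose_apply, sq]

theorem frobNorm_conj_of_orthogonal (hU : Uᵀ * U = 1) (M : Matrix (Fin N) (Fin N) ℝ) :
    frobNorm (U * M * Uᵀ) = frobNorm M := by
  have trace_eq : (U * M * Uᵀ * (U * M * Uᵀ)ᵀ).trace = (M * Mᵀ).trace :=
    calc (U * M * Uᵀ * (U * M * Uᵀ)ᵀ).trace
      _ = (U * (M * (Uᵀ * U) * Mᵀ * Uᵀ)).trace := by
        simp only [transpose_mul, transpose_transpose, Matrix.mul_assoc]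
      _ = (M * (Uᵀ * U) * Mᵀ * (Uᵀ * U)).trace := by
        rw [trace_mul_comm, Matrix.mul_assoc _ Uᵀ U]
      _ = (M * Mᵀ).trace := by rw [hU, Matrix.mul_one, Matrix.mul_one]
  rw [frobNorm_eq_sqrt_trace_mul_transpose, trace_eq, ← frobNorm_eq_sqrt_trace_mul_transpose]

theorem orthogonal_mul_mem_eigSet_conj (hU : Uᵀ * U = 1) (hV : V ∈ eigSet A) :
    U * V ∈ eigSet (U * A * Uᵀ) := by
  obtain ⟨hVV, Λ, hΛ, rfl⟩ := hV
  refine ⟨?_, Λ, hΛ, by simp only [transpose_mul, Matrix.mul_assoc]⟩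
  calc (U * V)ᵀ * (U * V)
    _ = Vᵀ * (Uᵀ * U) * V := by simp only [transpose_mul, Matrix.mul_assoc]
    _ = 1 := by rw [hU, Matrix.mul_one, hVV]

end Orthogonal

section Permutation

variable {N : ℕ} {A V : Matrix (Fin N) (Fin N) ℝ}

theorem mul_transpose_permMatrix_mem_eigSet (σ : Equiv.Perm (Fin N)) (hV : V ∈ eigSet A) :
    V * (σ.permMatrix ℝ)ᵀ ∈ eigSet A := by
  obtain ⟨hVV, Λ, hΛ, rfl⟩ := hV
  have hPP := permMatrix_transpose_mul_self (R := ℝ) σ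
  have hPP' := permMatrix_mul_transpose_self (R := ℝ) σ
  have hΛσ : (σ.permMatrix ℝ * Λ * (σ.permMatrix ℝ)ᵀ).IsDiag :=
    permMatrix_mul_mul_transpose σ Λ ▸ hΛ.submatrix σ.injective
  set P := σ.permMatrix ℝ
  refine ⟨?_, P * Λ * Pᵀ, hΛσ, ?_⟩
  · calc (V * Pᵀ)ᵀ * (V * Pᵀ)
      _ = P * (Vᵀ * V) * Pᵀ := by
        simp only [transpose_mul, transpose_transpose, Matrix.mul_assoc]
      _ = 1 := by rw [hVV, Matrix.mul_one, hPP']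
  · calc V * Λ * Vᵀ
      _ = V * (Pᵀ * P) * Λ * (Pᵀ * P) * Vᵀ := by rw [hPP, Matrix.mul_one, Matrix.mul_one]
      _ = V * Pᵀ * (P * Λ * Pᵀ) * (V * Pᵀ)ᵀ := by
        simp only [transpose_mul, transpose_transpose, Matrix.mul_assoc]

variable (A) (B : Matrix (Fin N) (Fin N) ℝ) (σ : Equiv.Perm (Fin N))

-- The substitution `(V, W) ↦ (P * V, W * Pᵀ)` conjugates `V * W - 1` by `P`.
theorem dualnessValues_subset_permMatrix_conj :
    dualnessValues A B ⊆ dualnessValues (σ.permMatrix ℝ * A * (σ.permMatrix ℝ)ᵀ) B := by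
  rintro _ ⟨V, hV, W, hW, rfl⟩
  have hPP := permMatrix_transpose_mul_self (R := ℝ) σ
  have hPP' := permMatrix_mul_transpose_self (R := ℝ) σ
  have hWP := mul_transpose_permMatrix_mem_eigSet σ hW
  set P := σ.permMatrix ℝ
  refine ⟨P * V, orthogonal_mul_mem_eigSet_conj hPP hV, W * Pᵀ, hWP, ?_⟩
  calc frobNorm (V * W - 1)
    _ = frobNorm (P * (V * W - 1) * Pᵀ) := (frobNorm_conj_of_orthogonal hPP _).symm
    _ = frobNorm (P * V * (W * Pᵀ) - 1) := by
      rw [Matrix.mul_sub, Matrix.sub_mul, Matrix.mul_one, hPP']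
      simp only [Matrix.mul_assoc]

theorem dualnessValues_permMatrix_conj :
    dualnessValues (σ.permMatrix ℝ * A * (σ.permMatrix ℝ)ᵀ) B = dualnessValues A B := by
  refine Set.Subset.antisymm ?_ (dualnessValues_subset_permMatrix_conj A B σ)
  have conj_inv_conj : σ⁻¹.permMatrix ℝ * (σ.permMatrix ℝ * A * (σ.permMatrix ℝ)ᵀ) *
      (σ⁻¹.permMatrix ℝ)ᵀ = A := by
    rw [permMatrix_mul_mul_transpose, permMatrix_mul_mul_transpose, submatrix_submatrix,
      ← Equiv.Perm.coe_mul, mul_inv_cancel, Equiv.Perm.coe_one, submatrix_id_id]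
  simpa only [conj_inv_conj] using dualnessValues_subset_permMatrix_conj
    (σ.permMatrix ℝ * A * (σ.permMatrix ℝ)ᵀ) B σ⁻¹

end Permutation

theorem dualness_invariant_under_isomorphism {N : ℕ}
    (A1 A2 B : Matrix (Fin N) (Fin N) ℝ)
    (hA1 : A1.IsSymm) (hA2 : A2.IsSymm) (hB : B.IsSymm)
    (P : Matrix (Fin N) (Fin N) ℝ)
    (hP : ∃ σ : Equiv.Perm (Fin N), P = σ.permMatrix ℝ)
    (hiso : A1 = P * A2 * Pᵀ) :
    sInf {x : ℝ | ∃ V1 ∈ eigSet A1, ∃ W ∈ eigSet B, x = frobNorm (V1 * W - 1)} =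
    sInf {x : ℝ | ∃ V2 ∈ eigSet A2, ∃ W ∈ eigSet B, x = frobNorm (V2 * W - 1)} := by
  obtain ⟨σ, rfl⟩ := hP
  subst hiso
  exact congrArg sInf (dualnessValues_permMatrix_conj A2 B σ)
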